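/- Let δ be the least ordinal with X_δ = X_{δ+1}, let K := B_u ∪ X_δ with the subspace topology, and let g : K → I be the restriction of f_u to K. Then: (1) K is a compact connected space; (2) for every t ∈ I the interior, taken in K, of g⁻¹(t) is contained in B_u; and (3) B_u is not dense in K; consequently the set Ω_g := ⋃_{t ∈ I} Int_K(g⁻¹(t)) is contained in B_u and is not dense in K. -/

import Mathlib

open Set Topology

noncomputable section

/-- A set is an `Fσ` set if it is a countable union of closed sets. -/
def IsFSigma {X : Type*} [TopologicalSpace X] (s : Set X) : Prop :=
  ∃ F : ℕ → Set X, (∀ n, IsClosed (F n)) ∧ s = ⋃ n, F n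

/-- A topological space is an `F`-space if any two disjoint open `Fσ` subsets
have disjoint closures. -/
def IsFSpace (X : Type*) [TopologicalSpace X] : Prop :=
  ∀ s t : Set X, IsOpen s → IsOpen t → IsFSigma s → IsFSigma t → Disjoint s t →
    Disjoint (closure s) (closure t)

/-- `𝐒 = ℕ × [0,1]²` where `ℕ` is discrete and `[0,1]` is the unit interval. -/
abbrev bS : Type := ℕ × (unitInterval × unitInterval)

/-- `βπ : β𝐒 → βℕ`, the Stone–Čech extension of the projection `π(n,x,y) = n`. -/
def betaPi : StoneCech bS → StoneCech ℕ :=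
  stoneCechExtend (continuous_stoneCechUnit.comp continuous_fst)

/-- `βf : β𝐒 → [0,1]`, the Stone–Čech extension of `f(n,x,y) = x`. -/
def betaF : StoneCech bS → unitInterval :=
  stoneCechExtend (continuous_fst.comp continuous_snd)

/-- `S_u = βπ⁻¹(u)`, as a subset of `β𝐒` (carrying the subspace topology). -/
def Su (u : StoneCech ℕ) : Set (StoneCech bS) := betaPi ⁻¹' {u}

/-- `f_u : S_u → [0,1]`, the restriction of `βf` to `S_u`. -/
def fu (u : StoneCech ℕ) : (Su u) → unitInterval := fun z => betaF z.1

/-- `L_t = f_u⁻¹(t) ∩ cl_{S_u} f_u⁻¹([0,t))`. -/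
def Lset (u : StoneCech ℕ) (t : unitInterval) : Set (Su u) :=
  fu u ⁻¹' {t} ∩ closure (fu u ⁻¹' (Set.Ico 0 t))

/-- `R_t = f_u⁻¹(t) ∩ cl_{S_u} f_u⁻¹((t,1])`. -/
def Rset (u : StoneCech ℕ) (t : unitInterval) : Set (Su u) :=
  fu u ⁻¹' {t} ∩ closure (fu u ⁻¹' (Set.Ioc t 1))

/-- The rectangle `P_{s,r} = S_u ∩ cl_{β𝐒}(ℕ × [s,r] × I)`, viewed as a subset of `S_u`. -/
def Pset (u : StoneCech ℕ) (s r : unitInterval) : Set (Su u) :=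
  Subtype.val ⁻¹' closure (stoneCechUnit '' {p : bS | p.2.1 ∈ Set.Icc s r})

/-- `L_{s,t} = cl_{S_u}(⋃_{s<r<t} P_{s,r})`. -/
def Lst (u : StoneCech ℕ) (s t : unitInterval) : Set (Su u) :=
  closure (⋃ r ∈ Set.Ioo s t, Pset u s r)

/-- The interior of `B` in the subspace `A`, viewed as a subset of the ambient space. -/
def relInt {Y : Type*} [TopologicalSpace Y] (A B : Set Y) : Set Y :=
  Subtype.val '' interior ((Subtype.val : A → Y) ⁻¹' B)

/-- The transfinite sequence `X_α ⊆ S_u`: `X_0 = S_u`,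
`X_{α+1} = X_α \ ⋃_{t} Int_{X_α}(X_α ∩ f_u⁻¹(t))`, and `X_λ = ⋂_{β<λ} X_β` at limits. -/
def Xseq (u : StoneCech ℕ) : Ordinal → Set (Su u) := fun α =>
  Ordinal.limitRecOn α Set.univ
    (fun _ Xa => Xa \ ⋃ t : unitInterval, relInt Xa (Xa ∩ fu u ⁻¹' {t}))
    (fun o _ ih => ⋂ (β : {β : Ordinal // β < o}), ih β.1 β.2)

/-- The bottom line `B_u = S_u ∩ cl_{β𝐒}(ℕ × I × {0})`, viewed as a subset of `S_u`. -/
def Bu (u : StoneCech ℕ) : Set (Su u) :=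
  Subtype.val ⁻¹' closure (stoneCechUnit '' {p : bS | p.2.2 = 0})

/-- The top line `T_u = S_u ∩ cl_{β𝐒}(ℕ × I × {1})`, viewed as a subset of `S_u`. -/
def Tu (u : StoneCech ℕ) : Set (Su u) :=
  Subtype.val ⁻¹' closure (stoneCechUnit '' {p : bS | p.2.2 = 1})

/-- The continuum `K = B_u ∪ X_δ`, as a subset of `S_u`. -/
def Kset (u : StoneCech ℕ) (δ : Ordinal) : Set (Su u) := Bu u ∪ Xseq u δ

/-- `g : K → I`, the restriction of `f_u` to `K`. -/
def gK (u : StoneCech ℕ) (δ : Ordinal) : (Kset u δ) → unitInterval :=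
  fun z => fu u z.1

lemma fu_cont (u : StoneCech ℕ) : Continuous (fu u) :=
  (continuous_stoneCechExtend _).comp continuous_subtype_val

lemma Xseq_zero (u : StoneCech ℕ) : Xseq u 0 = Set.univ := by
  simp [Xseq]

lemma Xseq_succ (u : StoneCech ℕ) (α : Ordinal) :
    Xseq u (α + 1) =
      Xseq u α \ ⋃ t : unitInterval, relInt (Xseq u α) (Xseq u α ∩ fu u ⁻¹' {t}) := by
  simp only [Xseq]
  rw [Ordinal.limitRecOn_add_one]

lemma Xseq_limit (u : StoneCech ℕ) (o : Ordinal) (ho : Order.IsSuccLimit o) :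
    Xseq u o = ⋂ (β : {β : Ordinal // β < o}), Xseq u β.1 := by
  simp only [Xseq]
  rw [Ordinal.limitRecOn_limit _ _ _ _ ho]

lemma mem_relInt {Y : Type*} [TopologicalSpace Y] (A B : Set Y) (y : Y) :
    y ∈ relInt A B ↔ y ∈ A ∧ ∃ O : Set Y, IsOpen O ∧ y ∈ O ∧ A ∩ O ⊆ B := by
  constructor
  · rintro ⟨z, hz, rfl⟩
    refine ⟨z.2, ?_⟩
    obtain ⟨W, hW, hWo, hzW⟩ := mem_interior.1 hz
    obtain ⟨O, hO, rfl⟩ := isOpen_induced_iff.1 hWo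
    exact ⟨O, hO, hzW, fun x hx => hW (show (⟨x, hx.1⟩ : A) ∈ Subtype.val ⁻¹' O from hx.2)⟩
  · rintro ⟨hA, O, hO, hy, hs⟩
    exact ⟨⟨y, hA⟩, mem_interior.2 ⟨Subtype.val ⁻¹' O, fun x hx => hs ⟨x.2, hx⟩,
      hO.preimage continuous_subtype_val, hy⟩, rfl⟩

lemma mem_Xseq_succ (u : StoneCech ℕ) (α : Ordinal) (y : Su u) :
    y ∈ Xseq u (α + 1) ↔ y ∈ Xseq u α ∧
      ∀ O : Set (Su u), IsOpen O → y ∈ O → ¬ (Xseq u α ∩ O ⊆ fu u ⁻¹' {fu u y}) := by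
  rw [Xseq_succ]
  constructor
  · rintro ⟨h, hn⟩
    refine ⟨h, fun O hO hy hs => hn (mem_iUnion.2 ⟨fu u y, (mem_relInt _ _ _).2
      ⟨h, O, hO, hy, fun x hx => ⟨hx.1, hs hx⟩⟩⟩)⟩
  · rintro ⟨h, hn⟩
    refine ⟨h, fun hm => ?_⟩
    obtain ⟨t, ht⟩ := mem_iUnion.1 hm
    obtain ⟨_, O, hO, hy, hs⟩ := (mem_relInt _ _ _).1 ht
    have : fu u y = t := (hs ⟨h, hy⟩).2
    subst this
    exact hn O hO hy (fun x hx => (hs hx).2)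

lemma Xseq_closed (u : StoneCech ℕ) (α : Ordinal) : IsClosed (Xseq u α) := by
  induction α using Ordinal.limitRecOn with
  | zero => rw [Xseq_zero]; exact isClosed_univ
  | add_one α ih =>
    rw [← isOpen_compl_iff, isOpen_iff_forall_mem_open]
    intro y hy
    by_cases h : y ∈ Xseq u α
    · have h2 : ¬ ∀ O : Set (Su u), IsOpen O → y ∈ O →
          ¬ (Xseq u α ∩ O ⊆ fu u ⁻¹' {fu u y}) := fun h2 =>
        hy ((mem_Xseq_succ u α y).2 ⟨h, h2⟩)
      push Not at h2
      obtain ⟨O, hO, hyO, hs⟩ := h2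
      refine ⟨O, fun x hx hxs => ?_, hO, hyO⟩
      obtain ⟨hx1, hx2⟩ := (mem_Xseq_succ u α x).1 hxs
      have hxy : fu u x = fu u y := hs ⟨hx1, hx⟩
      exact hx2 O hO hx (by rw [hxy]; exact hs)
    · exact ⟨(Xseq u α)ᶜ, fun x hx hxs => hx ((mem_Xseq_succ u α x).1 hxs).1,
        ih.isOpen_compl, h⟩
  | limit o ho ih =>
    rw [Xseq_limit u o ho]
    exact isClosed_iInter fun β => ih β.1 β.2

lemma Xseq_anti (u : StoneCech ℕ) (α β : Ordinal) (h : α ≤ β) : Xseq u β ⊆ Xseq u α := by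
  induction β using Ordinal.limitRecOn with
  | zero => have : α = 0 := by simpa using h
            rw [this]
  | add_one β ih =>
    rcases h.eq_or_lt with h | h
    · rw [h]
    · exact fun x hx => ih (Order.lt_add_one_iff.1 h) ((mem_Xseq_succ u β x).1 hx).1
  | limit o ho ih =>
    rcases h.eq_or_lt with h | h
    · rw [h]
    · rw [Xseq_limit u o ho]
      exact iInter_subset (fun β : {β : Ordinal // β < o} => Xseq u β.1) ⟨α, h⟩

lemma limit_nonempty (u : StoneCech ℕ) [CompactSpace (Su u)] (o : Ordinal)
    (ho : Order.IsSuccLimit o) (M : Set (Su u)) (hM : IsClosed M)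
    (h : ∀ β < o, (M ∩ Xseq u β).Nonempty) : (M ∩ Xseq u o).Nonempty := by
  rw [Xseq_limit u o ho]
  haveI : Nonempty {β : Ordinal // β < o} := ⟨⟨0, ho.bot_lt⟩⟩
  rw [inter_iInter]
  apply IsCompact.nonempty_iInter_of_directed_nonempty_isCompact_isClosed
  · intro a b
    rcases le_total a.1 b.1 with hab | hab
    · exact ⟨b, inter_subset_inter_right _ (Xseq_anti u _ _ hab), subset_rfl⟩
    · exact ⟨a, subset_rfl, inter_subset_inter_right _ (Xseq_anti u _ _ hab)⟩
  · exact fun β => h β.1 β.2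
  · exact fun β => (hM.inter (Xseq_closed u β.1)).isCompact
  · exact fun β => hM.inter (Xseq_closed u β.1)

lemma succ_step (u : StoneCech ℕ) [CompactSpace (Su u)] (α : Ordinal) (M : Set (Su u))
    (hM : IsClosed M) (t : unitInterval)
    (h : ∀ y ∈ M, fu u y = t → y ∉ Xseq u (α + 1)) :
    ∃ N : Set unitInterval, IsOpen N ∧ t ∈ N ∧
      ∀ y ∈ M, y ∈ Xseq u α → fu u y ∈ N → fu u y = t := by
  let O : Set (Su u) := ⋃₀ {O | IsOpen O ∧ Xseq u α ∩ O ⊆ fu u ⁻¹' {t}}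
  have hO : IsOpen O := isOpen_sUnion fun s hs => hs.1
  have hcl : IsClosed (fu u '' ((M ∩ Xseq u α) \ O)) :=
    ((((hM.inter (Xseq_closed u α)).sdiff hO).isCompact).image (fu_cont u)).isClosed
  refine ⟨_, hcl.isOpen_compl, ?_, ?_⟩
  · rintro ⟨y, ⟨⟨hy, hyX⟩, hyO⟩, hyt⟩
    apply h y hy hyt
    rw [mem_Xseq_succ]
    refine ⟨hyX, fun W hW hyW hs => hyO ⟨W, ⟨hW, ?_⟩, hyW⟩⟩
    rw [← hyt]; exact hs
  · intro y hy hyX hyN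
    by_contra hne
    apply hyN
    refine ⟨y, ⟨⟨hy, hyX⟩, ?_⟩, rfl⟩
    rintro ⟨W, ⟨_, hWs⟩, hyW⟩
    exact hne (hWs ⟨hyX, hyW⟩)

lemma line_point (u : StoneCech ℕ) (x y : unitInterval) :
    ∃ z : Su u, fu u z = x ∧
      z.1 ∈ closure (stoneCechUnit '' {p : bS | p.2.1 = x ∧ p.2.2 = y}) := by
  let h : ℕ → StoneCech bS := fun n => stoneCechUnit (n, (x, y))
  have hc : Continuous h := continuous_of_discreteTopology
  have h1 : betaPi ∘ stoneCechExtend hc = id := by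
    apply DenseRange.equalizer denseRange_stoneCechUnit
    · exact (continuous_stoneCechExtend _).comp (continuous_stoneCechExtend _)
    · exact continuous_id
    · funext n
      simp [h, betaPi, stoneCechExtend_stoneCechUnit]
  have h2 : betaF ∘ stoneCechExtend hc = fun _ => x := by
    apply DenseRange.equalizer denseRange_stoneCechUnit
    · exact (continuous_stoneCechExtend _).comp (continuous_stoneCechExtend _)
    · exact continuous_const
    · funext n
      simp [h, betaF, stoneCechExtend_stoneCechUnit]
  refine ⟨⟨stoneCechExtend hc u, congrFun h1 u⟩, congrFun h2 u, ?_⟩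
  have hu : u ∈ closure (range (stoneCechUnit : ℕ → StoneCech ℕ)) :=
    denseRange_stoneCechUnit u
  show stoneCechExtend hc u ∈ _
  refine map_mem_closure (continuous_stoneCechExtend hc) hu ?_
  rintro _ ⟨n, rfl⟩
  rw [stoneCechExtend_stoneCechUnit]
  exact ⟨(n, (x, y)), ⟨rfl, rfl⟩, rfl⟩

lemma Pset_sub (u : StoneCech ℕ) (s r : unitInterval) (z : Su u) (hz : z ∈ Pset u s r) :
    fu u z ∈ Icc s r := by
  have : closure (stoneCechUnit '' {p : bS | p.2.1 ∈ Set.Icc s r}) ⊆ betaF ⁻¹' (Icc s r) := by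
    apply closure_minimal
    · rintro _ ⟨p, hp, rfl⟩
      simpa [betaF, stoneCechExtend_stoneCechUnit] using hp
    · exact isClosed_Icc.preimage (continuous_stoneCechExtend _)
  exact this hz

lemma sub_Pset (u : StoneCech ℕ) (s r : unitInterval) (z : Su u)
    (hz : Icc s r ∈ 𝓝 (fu u z)) : z ∈ Pset u s r := by
  show z.1 ∈ closure _
  rw [mem_closure_iff_nhds]
  intro W hW
  have hF : betaF ⁻¹' (Icc s r) ∈ 𝓝 z.1 :=
    (continuous_stoneCechExtend _).continuousAt.preimage_mem_nhds hz
  obtain ⟨_, hq, p, rfl⟩ := mem_closure_iff_nhds.1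
    (denseRange_stoneCechUnit z.1 : z.1 ∈ closure (range (stoneCechUnit : bS → _))) _
    (Filter.inter_mem hW hF)
  refine ⟨_, hq.1, p, ?_, rfl⟩
  simpa [betaF, stoneCechExtend_stoneCechUnit] using hq.2

/-- The key induction: no fibre of `X_α` splits off a piece away from the bottom line. -/
lemma good (u : StoneCech ℕ) [CompactSpace (Su u)]
    (hP : ∀ s r : unitInterval, s < r → IsConnected (Pset u s r)) (α : Ordinal) :
    ∀ (t : unitInterval) (U V : Set (Su u)), IsOpen U → IsOpen V → Disjoint U V →
      Xseq u α ∩ fu u ⁻¹' {t} ⊆ U ∪ V → Bu u ⊆ V →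
      ∀ z ∈ Xseq u α, fu u z = t → z ∉ U := by
  induction α using Ordinal.limitRecOn with
  | zero =>
    intro t U V hU hV hUV hs hB z hz hzt hzU
    have hcl : IsClosed (fu u '' (U ∪ V)ᶜ) :=
      ((hU.union hV).isClosed_compl.isCompact.image (fu_cont u)).isClosed
    have htN : (fu u '' (U ∪ V)ᶜ)ᶜ ∈ 𝓝 t := by
      apply hcl.isOpen_compl.mem_nhds
      rintro ⟨y, hy, hyt⟩
      exact hy (hs ⟨by rw [Xseq_zero]; trivial, hyt⟩)
    obtain ⟨s, r, hst, hn, hsub⟩ := exists_Icc_mem_subset_of_mem_nhds htN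
    have hsr : s < r := by
      rcases (hst.1.trans hst.2).eq_or_lt with h | h
      · exfalso
        subst h
        rw [Icc_self] at hn
        have h1 : ({s}ᶜ : Set unitInterval) ∩ {s} ∈ 𝓝[≠] t := by
          have : s = t := by have := hst; rwa [Icc_self, mem_singleton_iff, eq_comm] at this
          subst this
          exact Filter.inter_mem self_mem_nhdsWithin (mem_nhdsWithin_of_mem_nhds hn)
        rw [compl_inter_self] at h1
        exact Filter.empty_notMem _ h1
      · exact h
    have hPs : Pset u s r ⊆ U ∪ V := by
      intro y hy
      by_contra hyn
      exact hsub (Pset_sub u s r y hy) ⟨y, hyn, rfl⟩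
    obtain ⟨b, hbx, hb⟩ := line_point u t 0
    have hbB : b ∈ Bu u := closure_mono (image_mono fun p hp => hp.2) hb
    have hbP : b ∈ Pset u s r := sub_Pset u s r b (by rw [hbx]; exact hn)
    have hzP : z ∈ Pset u s r := sub_Pset u s r z (by rw [hzt]; exact hn)
    obtain ⟨y, _, hyU, hyV⟩ := (hP s r hsr).isPreconnected U V hU hV hPs
      ⟨z, hzP, hzU⟩ ⟨b, hbP, hB hbB⟩
    exact disjoint_left.1 hUV hyU hyV
  | add_one α ih =>
    intro t U V hU hV hUV hs hB z hz hzt hzU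
    obtain ⟨N, hN, htN, h⟩ := succ_step u α (U ∪ V)ᶜ (hU.union hV).isClosed_compl t
      (fun y hy hyt hyX => hy (hs ⟨hyX, hyt⟩))
    refine ((mem_Xseq_succ u α z).1 hz).2 (U ∩ fu u ⁻¹' N)
      (hU.inter (hN.preimage (fu_cont u))) ⟨hzU, by rw [mem_preimage, hzt]; exact htN⟩ ?_
    rintro y ⟨hyX, hyU, hyN⟩
    rw [mem_preimage, mem_singleton_iff, hzt]
    by_contra hne
    refine ih (fu u y) U V hU hV hUV ?_ hB y hyX rfl hyU
    rintro w ⟨hwX, hwy⟩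
    have hwy : fu u w = fu u y := hwy
    by_contra hw
    exact hne (hwy ▸ h w hw hwX (by rw [hwy]; exact hyN))
  | limit o ho ih =>
    intro t U V hU hV hUV hs hB z hz hzt hzU
    by_contra
    have : ∃ β < o, ¬ (((U ∪ V)ᶜ ∩ fu u ⁻¹' {t}) ∩ Xseq u β).Nonempty := by
      by_contra hcon
      push Not at hcon
      obtain ⟨y, ⟨hy1, hy2⟩, hy3⟩ := limit_nonempty u o ho ((U ∪ V)ᶜ ∩ fu u ⁻¹' {t})
        ((hU.union hV).isClosed_compl.inter (isClosed_singleton.preimage (fu_cont u)))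
        (fun β hβ => by simpa [nonempty_iff_ne_empty] using hcon β hβ)
      exact hy1 (hs ⟨hy3, hy2⟩)
    obtain ⟨β, hβ, hn⟩ := this
    refine ih β hβ t U V hU hV hUV ?_ hB z (Xseq_anti u _ _ hβ.le hz) hzt hzU
    rintro y ⟨hyX, hyt⟩
    by_contra hy
    exact hn ⟨y, ⟨hy, hyt⟩, hyX⟩

lemma Tu_closed (u : StoneCech ℕ) : IsClosed (Tu u) :=
  isClosed_closure.preimage continuous_subtype_val

lemma Bu_closed (u : StoneCech ℕ) : IsClosed (Bu u) :=
  isClosed_closure.preimage continuous_subtype_val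

lemma top_surj (u : StoneCech ℕ) [CompactSpace (Su u)] (α : Ordinal) :
    ∀ t : unitInterval, ((Tu u ∩ fu u ⁻¹' {t}) ∩ Xseq u α).Nonempty := by
  induction α using Ordinal.limitRecOn with
  | zero =>
    intro t
    obtain ⟨b, hbx, hb⟩ := line_point u t 1
    exact ⟨b, ⟨closure_mono (image_mono fun p hp => hp.2) hb, hbx⟩, by rw [Xseq_zero]; trivial⟩
  | add_one α ih =>
    intro t
    by_contra hcon
    obtain ⟨N, hN, htN, h⟩ := succ_step u α (Tu u) (Tu_closed u) t
      (fun y hy hyt hyX => hcon ⟨y, ⟨hy, hyt⟩, hyX⟩)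
    have hm : N ∩ {t}ᶜ ∈ 𝓝[≠] t :=
      Filter.inter_mem (mem_nhdsWithin_of_mem_nhds (hN.mem_nhds htN)) self_mem_nhdsWithin
    obtain ⟨r, hrN, hrt⟩ := Filter.nonempty_of_mem hm
    obtain ⟨y, ⟨hyT, hyr⟩, hyX⟩ := ih r
    have hyr : fu u y = r := hyr
    exact hrt (hyr ▸ h y hyT hyX (hyr ▸ hrN))
  | limit o ho ih =>
    intro t
    exact limit_nonempty u o ho _
      ((Tu_closed u).inter (isClosed_singleton.preimage (fu_cont u))) (fun β hβ => ih β hβ t)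

/-- For the least `δ` with `X_δ = X_{δ+1}` and `K = B_u ∪ X_δ`: `K` is compact and
connected, the interior in `K` of every fiber of `g = f_u ∣ K` is contained in `B_u`,
and `B_u` is not dense in `K`; consequently `Ω_g = ⋃_t Int_K g⁻¹(t)` is contained in
`B_u` and is not dense in `K`. -/
theorem K_compact_connected_Omega_not_dense (u : StoneCech ℕ)
    (hu : ∀ n : ℕ, u ≠ stoneCechUnit n)
    (hne : (Su u).Nonempty) (hcomp : IsCompact (Su u)) (hconn : IsConnected (Su u))
    (hFsp : IsFSpace (Su u))
    (hP : ∀ s r : unitInterval, s < r → IsConnected (Pset u s r))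
    (hBconn : IsConnected (Bu u)) (hBT : Bu u ∩ Tu u = ∅)
    (δ : Ordinal) (hδ : Xseq u δ = Xseq u (δ + 1))
    (hmin : ∀ β < δ, Xseq u β ≠ Xseq u (β + 1)) :
    IsCompact (Kset u δ) ∧ IsConnected (Kset u δ) ∧
    (∀ t : unitInterval,
      Subtype.val '' interior (gK u δ ⁻¹' {t}) ⊆ Bu u) ∧
    ¬ Dense ((Subtype.val : (Kset u δ) → (Su u)) ⁻¹' Bu u) ∧
    (⋃ t : unitInterval, interior (gK u δ ⁻¹' {t})) ⊆
      (Subtype.val : (Kset u δ) → (Su u)) ⁻¹' Bu u ∧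
    ¬ Dense (⋃ t : unitInterval, interior (gK u δ ⁻¹' {t})) := by
  haveI : CompactSpace (Su u) := isCompact_iff_compactSpace.1 hcomp
  have hKcl : IsClosed (Kset u δ) := (Bu_closed u).union (Xseq_closed u δ)
  have h2 : ∀ t : unitInterval, Subtype.val '' interior (gK u δ ⁻¹' {t}) ⊆ Bu u := by
    rintro t _ ⟨z, hz, rfl⟩
    by_contra hzB
    have hzX : z.1 ∈ Xseq u δ := z.2.resolve_left hzB
    obtain ⟨W, hW, hWo, hzW⟩ := mem_interior.1 hz
    obtain ⟨O, hO, rfl⟩ := isOpen_induced_iff.1 hWo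
    have hzt : fu u z.1 = t := hW hzW
    have hzs : z.1 ∈ Xseq u (δ + 1) := by
      rw [← hδ]; exact hzX
    refine ((mem_Xseq_succ u δ z.1).1 hzs).2 (O ∩ (Bu u)ᶜ)
      (hO.inter (Bu_closed u).isOpen_compl) ⟨hzW, hzB⟩ ?_
    rintro y ⟨hyX, hyO, hyB⟩
    rw [hzt]
    exact hW (show (⟨y, Or.inr hyX⟩ : Kset u δ) ∈ Subtype.val ⁻¹' O from hyO)
  have h3 : ¬ Dense ((Subtype.val : (Kset u δ) → (Su u)) ⁻¹' Bu u) := by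
    intro hd
    obtain ⟨y, ⟨hyT, _⟩, hyX⟩ := top_surj u δ 0
    have hcl : IsClosed ((Subtype.val : (Kset u δ) → (Su u)) ⁻¹' Bu u) :=
      (Bu_closed u).preimage continuous_subtype_val
    have h := hd ⟨y, Or.inr hyX⟩
    rw [hcl.closure_eq] at h
    have : y ∈ Bu u ∩ Tu u := ⟨h, hyT⟩
    rw [hBT] at this
    exact this
  have h4 : (⋃ t : unitInterval, interior (gK u δ ⁻¹' {t})) ⊆
      (Subtype.val : (Kset u δ) → (Su u)) ⁻¹' Bu u :=
    iUnion_subset fun t z hz => h2 t ⟨z, hz, rfl⟩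
  refine ⟨hKcl.isCompact, ⟨hBconn.nonempty.mono subset_union_left, ?_⟩, h2, h3, h4,
    fun hd => h3 (hd.mono h4)⟩
  have key : ∀ F G : Set (Su u), IsClosed F → IsClosed G → Kset u δ ⊆ F ∪ G →
      Kset u δ ∩ (F ∩ G) = ∅ → Bu u ⊆ G → ¬ (Kset u δ ∩ F).Nonempty := by
    rintro F G hF hG hK hFG hB ⟨z, hzK, hzF⟩
    have hd : Disjoint (Kset u δ ∩ F) (Kset u δ ∩ G) := by
      rw [disjoint_left]
      intro y h1 h2
      have : y ∈ Kset u δ ∩ (F ∩ G) := ⟨h1.1, h1.2, h2.2⟩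
      rw [hFG] at this
      exact this
    obtain ⟨U, V, hU, hV, hFU, hGV, hUV⟩ :=
      normal_separation (hKcl.inter hF) (hKcl.inter hG) hd
    have hBV : Bu u ⊆ V := fun b hb => hGV ⟨Or.inl hb, hB hb⟩
    have hzU : z ∈ U := hFU ⟨hzK, hzF⟩
    rcases hzK with hzB | hzX
    · exact disjoint_left.1 hUV hzU (hBV hzB)
    · refine good u hP δ (fu u z) U V hU hV hUV ?_ hBV z hzX rfl hzU
      rintro y ⟨hyX, _⟩
      rcases hK (Or.inr hyX) with h | h
      · exact Or.inl (hFU ⟨Or.inr hyX, h⟩)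
      · exact Or.inr (hGV ⟨Or.inr hyX, h⟩)
  rw [isPreconnected_closed_iff]
  intro F G hF hG hK hKF hKG
  by_contra hcon
  rw [not_nonempty_iff_eq_empty] at hcon
  have hBFG : Bu u ∩ (F ∩ G) = ∅ := by
    rw [← subset_empty_iff, ← hcon]
    exact inter_subset_inter_left _ subset_union_left
  rcases (isPreconnected_iff_subset_of_disjoint_closed.1 hBconn.isPreconnected) F G hF hG
    (subset_union_left.trans hK) hBFG with h | h
  · exact key G F hG hF (by rwa [union_comm]) (by rwa [inter_comm G F]) h hKG
  · exact key F G hF hG hK hcon h hKF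

end
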